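/- Let φ, θ, u be smooth fields on (0,T) × ℝ^d with θ > 0 everywhere satisfying the phase-field equation (AC) ∂_tφ + u·∇φ = −Mμ/θ and the internal energy equation (IE) ∂_te + u·∇e = −div(K∇(1/θ)) + η|Du|² − σ̃:∇u + Q. Then the entropy equation in divergence form holds pointwise: ∂_ts + u·∇s = M(μ/θ)² + K|∇(1/θ)|² + (η/θ)|Du|² + Q/θ − div((K/θ)∇(1/θ) + ∇G(∇φ) ∂_tφ + ∇G(∇φ)(∇φ·u)). -/

import Mathlib

/-!
Everything is phrased through the material derivative: for a jointly differentiable field `g`,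
`∂ₜg + v·∇g` is the derivative of `g` on space-time in the direction `(1, v)`
(`material_eq_fderiv`).

* Since `e = f - θ ∂_θf`, the material derivative of `e` is `∂_φf · φ̇ - θ · (∂_θf)˙`
  (`material_intE`), so dividing (IE) by `θ` gives the part of `ṡ` coming from `-∂_θf`.
* Symmetry of the second derivative of `φ` gives `(∂ᵢφ)˙ = ∂ᵢ(φ̇) - ∑ⱼ ∂ᵢuⱼ ∂ⱼφ`
  (`pd_material`), hence `(G(∇φ))˙ = ∑ᵢ ∂ᵢG(∇φ) (∂ᵢ(φ̇) - ∑ⱼ ∂ᵢuⱼ ∂ⱼφ)`. The last sum cancels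
  the Korteweg term `σ̃:∇u / θ`.
* The product rule turns `(1/θ) div(K∇(1/θ))` and `∇G(∇φ)·∇φ̇` into divergences. What is left
  over is `K|∇(1/θ)|²` and `φ̇ (div ∇G(∇φ) - ∂_φf/θ) = -φ̇ μ/θ`, which is `M(μ/θ)²` by (AC).
-/

open MeasureTheory

noncomputable section

/-- `i`-th spatial partial derivative of a scalar field. -/
def pd {d : ℕ} (i : Fin d) (g : (Fin d → ℝ) → ℝ) (x : Fin d → ℝ) : ℝ :=
  fderiv ℝ g x (Pi.single i 1)

/-- Spatial gradient of a scalar field. -/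
def grad {d : ℕ} (g : (Fin d → ℝ) → ℝ) (x : Fin d → ℝ) : Fin d → ℝ :=
  fun i => pd i g x

/-- Divergence of a vector field. -/
def divg {d : ℕ} (u : (Fin d → ℝ) → Fin d → ℝ) (x : Fin d → ℝ) : ℝ :=
  ∑ i, pd i (fun y => u y i) x

/-- Euclidean dot product. -/
def dot {d : ℕ} (a b : Fin d → ℝ) : ℝ := ∑ i, a i * b i

/-- Time derivative of a time-dependent scalar field. -/
def dt {d : ℕ} (g : ℝ → (Fin d → ℝ) → ℝ) (t : ℝ) (x : Fin d → ℝ) : ℝ :=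
  deriv (fun s => g s x) t

/-- The box `Ω = [0, L₁] × ⋯ × [0, L_d]`. -/
def box {d : ℕ} (L : Fin d → ℝ) : Set (Fin d → ℝ) :=
  Set.univ.pi fun i => Set.Icc 0 (L i)

/-- Spatial periodicity with periods `L`. -/
def SpacePeriodic {d : ℕ} (L : Fin d → ℝ) (g : (Fin d → ℝ) → ℝ) : Prop :=
  ∀ x i, g (x + Pi.single i (L i)) = g x

/-- Entropy density `s = -G(∇φ) - ∂_θ f(φ, θ)`. -/
def entS {d : ℕ} (G : (Fin d → ℝ) → ℝ) (f : ℝ → ℝ → ℝ)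
    (φ θ : ℝ → (Fin d → ℝ) → ℝ) (t : ℝ) (x : Fin d → ℝ) : ℝ :=
  -G (grad (φ t) x) - deriv (f (φ t x)) (θ t x)

/-- Internal energy density `e = f(φ, θ) - θ ∂_θ f(φ, θ)`. -/
def intE {d : ℕ} (f : ℝ → ℝ → ℝ) (φ θ : ℝ → (Fin d → ℝ) → ℝ)
    (t : ℝ) (x : Fin d → ℝ) : ℝ :=
  f (φ t x) (θ t x) - θ t x * deriv (f (φ t x)) (θ t x)

/-- Total energy density `e_tot = e + |u|²/2`. -/
def totE {d : ℕ} (f : ℝ → ℝ → ℝ) (φ θ : ℝ → (Fin d → ℝ) → ℝ)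
    (u : ℝ → (Fin d → ℝ) → Fin d → ℝ) (t : ℝ) (x : Fin d → ℝ) : ℝ :=
  intE f φ θ t x + (1 / 2) * ∑ i, (u t x i) ^ 2

/-- Chemical potential `μ = -θ div(∇G(∇φ)) + ∂_φ f(φ, θ)`. -/
def chemMu {d : ℕ} (G : (Fin d → ℝ) → ℝ) (f : ℝ → ℝ → ℝ)
    (φ θ : ℝ → (Fin d → ℝ) → ℝ) (t : ℝ) (x : Fin d → ℝ) : ℝ :=
  -θ t x * divg (fun y => grad G (grad (φ t) y)) x
    + deriv (fun a => f a (θ t x)) (φ t x)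

/-- Korteweg stress `σ̃ᵢⱼ = θ (∇G(∇φ))ᵢ ∂ⱼφ`. -/
def korteweg {d : ℕ} (G : (Fin d → ℝ) → ℝ)
    (φ θ : ℝ → (Fin d → ℝ) → ℝ) (t : ℝ) (x : Fin d → ℝ) (i j : Fin d) : ℝ :=
  θ t x * grad G (grad (φ t) x) i * pd j (φ t) x

/-- Symmetric gradient `Dw = (∇w + (∇w)ᵀ)/2` of a (spatial) vector field. -/
def symGrad {d : ℕ} (w : (Fin d → ℝ) → Fin d → ℝ) (x : Fin d → ℝ) (i j : Fin d) : ℝ :=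
  (pd i (fun y => w y j) x + pd j (fun y => w y i) x) / 2

/-! ### Material and partial derivatives -/

section Calculus

variable {d : ℕ}

lemma sum_single_clm (L : (Fin d → ℝ) →L[ℝ] ℝ) (v : Fin d → ℝ) :
    ∑ i, v i * L (Pi.single i 1) = L v := by
  conv_rhs => rw [pi_eq_sum_univ' v]
  rw [map_sum]
  refine Finset.sum_congr rfl fun i _ => ?_
  rw [map_smul, smul_eq_mul]

lemma pd_eq_fderiv {g : ℝ → (Fin d → ℝ) → ℝ} {t : ℝ} {x : Fin d → ℝ}
    (h : DifferentiableAt ℝ (fun q : ℝ × (Fin d → ℝ) => g q.1 q.2) (t, x)) (i : Fin d) :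
    pd i (g t) x
      = fderiv ℝ (fun q : ℝ × (Fin d → ℝ) => g q.1 q.2) (t, x) (0, Pi.single i 1) := by
  have h1 := h.hasFDerivAt.comp x (hasFDerivAt_prodMk_right t x)
  have h2 : fderiv ℝ (g t) x = _ := h1.fderiv
  rw [pd, h2]
  simp

lemma dt_eq_fderiv {g : ℝ → (Fin d → ℝ) → ℝ} {t : ℝ} {x : Fin d → ℝ}
    (h : DifferentiableAt ℝ (fun q : ℝ × (Fin d → ℝ) => g q.1 q.2) (t, x)) :
    dt g t x = fderiv ℝ (fun q : ℝ × (Fin d → ℝ) => g q.1 q.2) (t, x) (1, 0) := by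
  have h1 := (h.hasFDerivAt.comp t (hasFDerivAt_prodMk_left t x)).hasDerivAt
  have h2 : dt g t x = _ := h1.deriv
  rw [h2]
  simp

lemma dot_grad_eq_fderiv {g : ℝ → (Fin d → ℝ) → ℝ} {t : ℝ} {x : Fin d → ℝ}
    (h : DifferentiableAt ℝ (fun q : ℝ × (Fin d → ℝ) => g q.1 q.2) (t, x))
    (v : Fin d → ℝ) :
    dot v (grad (g t) x)
      = fderiv ℝ (fun q : ℝ × (Fin d → ℝ) => g q.1 q.2) (t, x) (0, v) := by
  have := sum_single_clm
    ((fderiv ℝ (fun q : ℝ × (Fin d → ℝ) => g q.1 q.2) (t, x)).comp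
      (ContinuousLinearMap.inr ℝ ℝ (Fin d → ℝ))) v
  simp only [ContinuousLinearMap.comp_apply, ContinuousLinearMap.inr_apply] at this
  rw [← this]
  simp only [dot, grad, pd_eq_fderiv h]

/-- The material derivative is the space-time derivative in the direction `(1, v)`. -/
lemma material_eq_fderiv {g : ℝ → (Fin d → ℝ) → ℝ} {t : ℝ} {x : Fin d → ℝ}
    (h : DifferentiableAt ℝ (fun q : ℝ × (Fin d → ℝ) => g q.1 q.2) (t, x))
    (v : Fin d → ℝ) :
    dt g t x + dot v (grad (g t) x)
      = fderiv ℝ (fun q : ℝ × (Fin d → ℝ) => g q.1 q.2) (t, x) (1, v) := by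
  rw [dt_eq_fderiv h, dot_grad_eq_fderiv h, ← map_add]
  simp

lemma pd_mul {a b : (Fin d → ℝ) → ℝ} {x : Fin d → ℝ} (ha : DifferentiableAt ℝ a x)
    (hb : DifferentiableAt ℝ b x) (i : Fin d) :
    pd i (fun y => a y * b y) x = pd i a x * b x + a x * pd i b x := by
  simp only [pd, fderiv_fun_mul ha hb]
  simp
  ring

lemma pd_add {a b : (Fin d → ℝ) → ℝ} {x : Fin d → ℝ} (ha : DifferentiableAt ℝ a x)
    (hb : DifferentiableAt ℝ b x) (i : Fin d) :
    pd i (fun y => a y + b y) x = pd i a x + pd i b x := by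
  simp [pd, fderiv_fun_add ha hb]

end Calculus

/-! ### Commuting derivatives and chain rules for the fields -/

section Fields

variable {d : ℕ}

lemma differentiable_slice {E : Type*} [NormedAddCommGroup E] [NormedSpace ℝ E]
    {g : ℝ → (Fin d → ℝ) → E}
    (h : Differentiable ℝ (fun q : ℝ × (Fin d → ℝ) => g q.1 q.2)) (t : ℝ) :
    Differentiable ℝ (g t) := by
  have : g t = (fun q : ℝ × (Fin d → ℝ) => g q.1 q.2) ∘ fun y => (t, y) := rfl
  rw [this]
  exact h.comp (by fun_prop)

lemma contDiff_pd {g : ℝ → (Fin d → ℝ) → ℝ}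
    (h : ContDiff ℝ (⊤ : ℕ∞) fun q : ℝ × (Fin d → ℝ) => g q.1 q.2) (i : Fin d) :
    ContDiff ℝ (⊤ : ℕ∞) fun q : ℝ × (Fin d → ℝ) => pd i (g q.1) q.2 := by
  have hd := h.differentiable (by simp)
  have : (fun q : ℝ × (Fin d → ℝ) => pd i (g q.1) q.2)
      = fun q => fderiv ℝ (fun q : ℝ × (Fin d → ℝ) => g q.1 q.2) q (0, Pi.single i 1) :=
    funext fun q => pd_eq_fderiv (hd (q.1, q.2)) i
  rw [this]
  exact (h.fderiv_right (m := (⊤ : ℕ∞)) (by simp)).clm_apply contDiff_const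

lemma contDiff_pd_slice {g : (Fin d → ℝ) → ℝ} {n m : WithTop ℕ∞} (h : ContDiff ℝ n g)
    (hmn : m + 1 ≤ n) (i : Fin d) : ContDiff ℝ m (pd i g) :=
  (h.fderiv_right hmn).clm_apply contDiff_const

/-- Commuting `∂ᵢ` with the material derivative: `∂ᵢ(φ̇) = (∂ᵢφ)˙ + ∑ⱼ ∂ᵢuⱼ ∂ⱼφ`, with
`φ̇ = ∂ₜφ + u·∇φ` differentiable in space. Differentiating `Dφ (1, u)` gives `D²φ` on the pair
`((0, eᵢ), (1, u))`, which symmetry identifies with `(∂ᵢφ)˙`, plus `Dφ (0, ∂ᵢu)`. -/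
lemma pd_material {φ : ℝ → (Fin d → ℝ) → ℝ} {u : ℝ → (Fin d → ℝ) → Fin d → ℝ}
    (hφ : ContDiff ℝ (⊤ : ℕ∞) fun q : ℝ × (Fin d → ℝ) => φ q.1 q.2)
    (hu : ContDiff ℝ (⊤ : ℕ∞) fun q : ℝ × (Fin d → ℝ) => u q.1 q.2)
    (t : ℝ) (x : Fin d → ℝ) (i : Fin d) :
    DifferentiableAt ℝ (fun y => dt φ t y + dot (u t y) (grad (φ t) y)) x ∧
    pd i (fun y => dt φ t y + dot (u t y) (grad (φ t) y)) x
      = fderiv ℝ (fun q : ℝ × (Fin d → ℝ) => pd i (φ q.1) q.2) (t, x) (1, u t x)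
        + ∑ j, pd i (fun y => u t y j) x * pd j (φ t) x := by
  have hφd := hφ.differentiable (by simp)
  have hud := hu.differentiable (by simp)
  set P := fun q : ℝ × (Fin d → ℝ) => φ q.1 q.2 with hP
  have hD : ContDiff ℝ (⊤ : ℕ∞) (fderiv ℝ P) := hφ.fderiv_right (by simp)
  have hDd : DifferentiableAt ℝ (fderiv ℝ P) (t, x) := hD.differentiable (by simp) _
  have hut : DifferentiableAt ℝ (u t) x := differentiable_slice hud t x
  have hmat : (fun y => dt φ t y + dot (u t y) (grad (φ t) y))
      = fun y => fderiv ℝ P (t, y) (1, u t y) :=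
    funext fun y => material_eq_fderiv (hφd (t, y)) (u t y)
  have hpd : (fun q : ℝ × (Fin d → ℝ) => pd i (φ q.1) q.2)
      = fun q => fderiv ℝ P q (0, Pi.single i 1) :=
    funext fun q => pd_eq_fderiv (hφd (q.1, q.2)) i
  have h1 : HasFDerivAt (fun y : Fin d → ℝ => fderiv ℝ P (t, y)) _ x :=
    hDd.hasFDerivAt.comp x (hasFDerivAt_prodMk_right t x)
  have h2 : HasFDerivAt (fun y : Fin d → ℝ => ((1 : ℝ), u t y)) _ x :=
    (hasFDerivAt_const (1 : ℝ) x).prodMk hut.hasFDerivAt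
  have h3 := h1.clm_apply h2
  have h4 : HasFDerivAt (fun q => fderiv ℝ P q (0, Pi.single i 1)) _ (t, x) :=
    hDd.hasFDerivAt.clm_apply (hasFDerivAt_const ((0 : ℝ), (Pi.single i 1 : Fin d → ℝ)) (t, x))
  have hsymm : IsSymmSndFDerivAt ℝ P (t, x) :=
    hφ.contDiffAt.isSymmSndFDerivAt
      (by simpa using WithTop.coe_le_coe.2 (le_top : (2 : ℕ∞) ≤ ⊤))
  rw [hmat, hpd]
  refine ⟨h3.differentiableAt, ?_⟩
  have hcomp : ∀ j, pd i (fun y => u t y j) x = fderiv ℝ (u t) x (Pi.single i 1) j := by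
    intro j
    have := (hasFDerivAt_pi'.1 hut.hasFDerivAt j).fderiv
    rw [pd, this]
    simp
  have hlast : ∑ j, pd i (fun y => u t y j) x * pd j (φ t) x
      = fderiv ℝ P (t, x) (0, fderiv ℝ (u t) x (Pi.single i 1)) := by
    rw [← dot_grad_eq_fderiv (hφd (t, x))]
    simp only [dot, grad, hcomp]
  rw [hlast, pd, h3.fderiv, h4.fderiv]
  simp
  rw [hsymm.eq]
  ring

/-- Chain rule for `G(∇φ)` along a space-time direction `w`; for `w = (1, u)` it reads
`(G(∇φ))˙ = ∑ᵢ ∂ᵢG(∇φ) (∂ᵢφ)˙`. -/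
lemma fderiv_G_grad {G : (Fin d → ℝ) → ℝ} (hG : ContDiff ℝ 2 G)
    {φ : ℝ → (Fin d → ℝ) → ℝ}
    (hφ : ContDiff ℝ (⊤ : ℕ∞) fun q : ℝ × (Fin d → ℝ) => φ q.1 q.2)
    (p w : ℝ × (Fin d → ℝ)) :
    DifferentiableAt ℝ (fun q : ℝ × (Fin d → ℝ) => G (grad (φ q.1) q.2)) p ∧
    fderiv ℝ (fun q : ℝ × (Fin d → ℝ) => G (grad (φ q.1) q.2)) p w
      = ∑ i, grad G (grad (φ p.1) p.2) i
          * fderiv ℝ (fun q : ℝ × (Fin d → ℝ) => pd i (φ q.1) q.2) p w := by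
  have hg : HasFDerivAt (fun q : ℝ × (Fin d → ℝ) => grad (φ q.1) q.2) _ p :=
    hasFDerivAt_pi.2 fun i =>
      ((contDiff_pd hφ i).differentiable (by simp) p).hasFDerivAt
  have hGd := (hG.differentiable (by simp) (grad (φ p.1) p.2)).hasFDerivAt
  have h := hGd.comp p hg
  refine ⟨h.differentiableAt, ?_⟩
  have h' : fderiv ℝ (fun q : ℝ × (Fin d → ℝ) => G (grad (φ q.1) q.2)) p = _ := h.fderiv
  rw [h', ContinuousLinearMap.comp_apply, ← sum_single_clm]
  refine Finset.sum_congr rfl fun i _ => ?_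
  rw [mul_comm]
  rfl

/-! ### Free energy, internal energy and entropy -/

section FreeEnergy

variable {f : ℝ → ℝ → ℝ}

lemma fderiv_f (hf : ContDiffOn ℝ 2 (fun q : ℝ × ℝ => f q.1 q.2) (Set.univ ×ˢ Set.Ioi 0))
    {a b : ℝ} (hb : 0 < b) (v w : ℝ) :
    fderiv ℝ (fun q : ℝ × ℝ => f q.1 q.2) (a, b) (v, w)
      = v * deriv (fun a => f a b) a + w * deriv (f a) b := by
  have hd : DifferentiableAt ℝ (fun q : ℝ × ℝ => f q.1 q.2) (a, b) :=
    (hf.contDiffAt ((isOpen_univ.prod isOpen_Ioi).mem_nhds ⟨Set.mem_univ _, Set.mem_Ioi.2 hb⟩)).differentiableAt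
      (by simp)
  have h1 : deriv (fun a => f a b) a = _ :=
    (HasFDerivAt.comp (g := fun q : ℝ × ℝ => f q.1 q.2) (f := fun a => (a, b)) a
      hd.hasFDerivAt (hasFDerivAt_prodMk_left a b)).hasDerivAt.deriv
  have h2 : deriv (f a) b = _ :=
    (HasFDerivAt.comp (g := fun q : ℝ × ℝ => f q.1 q.2) (f := fun b => (a, b)) b
      hd.hasFDerivAt (hasFDerivAt_prodMk_right a b)).hasDerivAt.deriv
  rw [h1, h2, ← smul_eq_mul, ← smul_eq_mul]
  simp only [ContinuousLinearMap.comp_apply, ← map_smul, ← map_add]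
  simp

/-- `∂_θf` is differentiable on `θ > 0`, since it is a component of the derivative of the
`C²` function `f`. -/
lemma differentiableAt_ftheta
    (hf : ContDiffOn ℝ 2 (fun q : ℝ × ℝ => f q.1 q.2) (Set.univ ×ˢ Set.Ioi 0))
    {a b : ℝ} (hb : 0 < b) :
    DifferentiableAt ℝ (fun q : ℝ × ℝ => deriv (f q.1) q.2) (a, b) := by
  have hopen : IsOpen ((Set.univ : Set ℝ) ×ˢ Set.Ioi (0 : ℝ)) := isOpen_univ.prod isOpen_Ioi
  have hmem : ((Set.univ : Set ℝ) ×ˢ Set.Ioi (0 : ℝ)) ∈ nhds (a, b) :=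
    hopen.mem_nhds ⟨trivial, hb⟩
  have h1 : DifferentiableAt ℝ (fderiv ℝ (fun q : ℝ × ℝ => f q.1 q.2)) (a, b) :=
    ((hf.contDiffAt hmem).fderiv_right (m := 1) (by norm_num)).differentiableAt (by simp)
  have h2 : DifferentiableAt ℝ
      (fun q => fderiv ℝ (fun q : ℝ × ℝ => f q.1 q.2) q (0, 1)) (a, b) :=
    h1.clm_apply (differentiableAt_const _)
  refine h2.congr_of_eventuallyEq ?_
  filter_upwards [hmem] with q hq
  have := fderiv_f hf (a := q.1) (b := q.2) hq.2 0 1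
  simpa using this.symm

lemma differentiable_ftheta_comp
    (hf : ContDiffOn ℝ 2 (fun q : ℝ × ℝ => f q.1 q.2) (Set.univ ×ˢ Set.Ioi 0))
    {φ θ : ℝ → (Fin d → ℝ) → ℝ}
    (hφ : Differentiable ℝ fun q : ℝ × (Fin d → ℝ) => φ q.1 q.2)
    (hθ : Differentiable ℝ fun q : ℝ × (Fin d → ℝ) => θ q.1 q.2)
    (hpos : ∀ t x, 0 < θ t x) :
    Differentiable ℝ
      fun q : ℝ × (Fin d → ℝ) => deriv (f (φ q.1 q.2)) (θ q.1 q.2) := fun q =>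
  DifferentiableAt.comp (g := fun p : ℝ × ℝ => deriv (f p.1) p.2)
    (f := fun q : ℝ × (Fin d → ℝ) => (φ q.1 q.2, θ q.1 q.2)) q
    (differentiableAt_ftheta hf (hpos q.1 q.2)) ((hφ q).prodMk (hθ q))

/-- Gibbs relation `ė = ∂_φf · φ̇ - θ · (∂_θf)˙`: the terms `∂_θf · θ̇` cancel. -/
lemma material_intE
    (hf : ContDiffOn ℝ 2 (fun q : ℝ × ℝ => f q.1 q.2) (Set.univ ×ˢ Set.Ioi 0))
    {φ θ : ℝ → (Fin d → ℝ) → ℝ}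
    (hφ : Differentiable ℝ fun q : ℝ × (Fin d → ℝ) => φ q.1 q.2)
    (hθ : Differentiable ℝ fun q : ℝ × (Fin d → ℝ) => θ q.1 q.2)
    (hpos : ∀ t x, 0 < θ t x) (t : ℝ) (x v : Fin d → ℝ) :
    dt (intE f φ θ) t x + dot v (grad (intE f φ θ t) x)
      = deriv (fun a => f a (θ t x)) (φ t x) * (dt φ t x + dot v (grad (φ t) x))
        - θ t x * fderiv ℝ
            (fun q : ℝ × (Fin d → ℝ) => deriv (f (φ q.1 q.2)) (θ q.1 q.2)) (t, x) (1, v) := by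
  have hF : DifferentiableAt ℝ (fun q : ℝ × ℝ => f q.1 q.2) (φ t x, θ t x) :=
    (hf.contDiffAt ((isOpen_univ.prod isOpen_Ioi).mem_nhds
      ⟨Set.mem_univ _, Set.mem_Ioi.2 (hpos t x)⟩)).differentiableAt (by simp)
  have h1 : HasFDerivAt (fun q : ℝ × (Fin d → ℝ) => f (φ q.1 q.2) (θ q.1 q.2)) _ (t, x) :=
    HasFDerivAt.comp (g := fun q : ℝ × ℝ => f q.1 q.2)
      (f := fun q : ℝ × (Fin d → ℝ) => (φ q.1 q.2, θ q.1 q.2)) (t, x) hF.hasFDerivAt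
      ((hφ (t, x)).hasFDerivAt.prodMk (hθ (t, x)).hasFDerivAt)
  have h2 := (hθ (t, x)).hasFDerivAt.mul
    (differentiable_ftheta_comp hf hφ hθ hpos (t, x)).hasFDerivAt
  have h3 : HasFDerivAt (fun q : ℝ × (Fin d → ℝ) => intE f φ θ q.1 q.2) _ (t, x) := h1.sub h2
  rw [material_eq_fderiv h3.differentiableAt, h3.fderiv, material_eq_fderiv (hφ (t, x))]
  simp only [sub_apply, ContinuousLinearMap.comp_apply,
    add_apply, smul_apply, smul_eq_mul,
    ContinuousLinearMap.prod_apply, fderiv_f hf (hpos t x)]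
  ring

end FreeEnergy

/-- `ṡ = -∑ᵢ ∂ᵢG(∇φ) (∂ᵢφ)˙ - (∂_θf)˙`. -/
lemma material_entS {G : (Fin d → ℝ) → ℝ} (hG : ContDiff ℝ 2 G) {f : ℝ → ℝ → ℝ}
    (hf : ContDiffOn ℝ 2 (fun q : ℝ × ℝ => f q.1 q.2) (Set.univ ×ˢ Set.Ioi 0))
    {φ θ : ℝ → (Fin d → ℝ) → ℝ}
    (hφ : ContDiff ℝ (⊤ : ℕ∞) fun q : ℝ × (Fin d → ℝ) => φ q.1 q.2)
    (hθ : Differentiable ℝ fun q : ℝ × (Fin d → ℝ) => θ q.1 q.2)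
    (hpos : ∀ t x, 0 < θ t x) (t : ℝ) (x v : Fin d → ℝ) :
    dt (entS G f φ θ) t x + dot v (grad (entS G f φ θ t) x)
      = -(∑ i, grad G (grad (φ t) x) i
          * fderiv ℝ (fun q : ℝ × (Fin d → ℝ) => pd i (φ q.1) q.2) (t, x) (1, v))
        - fderiv ℝ
            (fun q : ℝ × (Fin d → ℝ) => deriv (f (φ q.1 q.2)) (θ q.1 q.2)) (t, x) (1, v) := by
  obtain ⟨hGd, hGe⟩ := fderiv_G_grad hG hφ (t, x) (1, v)
  have h : HasFDerivAt (fun q : ℝ × (Fin d → ℝ) => entS G f φ θ q.1 q.2) _ (t, x) :=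
    hGd.hasFDerivAt.neg.sub
      (differentiable_ftheta_comp hf (hφ.differentiable (by simp)) hθ hpos (t, x)).hasFDerivAt
  rw [material_eq_fderiv h.differentiableAt, h.fderiv, sub_apply,
    neg_apply, hGe]

end Fields

/-! ### The entropy equation -/

/-- divergence form of the entropy equation, given (AC) and (IE). -/
theorem entropy_equation_divergence_form
    {d : ℕ} (hd : d = 1 ∨ d = 2 ∨ d = 3)
    (T : ℝ) (hT : 0 < T)
    (G : (Fin d → ℝ) → ℝ) (hG : ContDiff ℝ 2 G)
    (f : ℝ → ℝ → ℝ)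
    (hf : ContDiffOn ℝ 2 (fun q : ℝ × ℝ => f q.1 q.2) (Set.univ ×ˢ Set.Ioi 0))
    (M K η : ℝ → ℝ → ℝ)
    (hM : ContDiff ℝ (⊤ : ℕ∞) fun q : ℝ × ℝ => M q.1 q.2) (hMpos : ∀ a b, 0 < M a b)
    (hK : ContDiff ℝ (⊤ : ℕ∞) fun q : ℝ × ℝ => K q.1 q.2) (hKpos : ∀ a b, 0 < K a b)
    (hη : ContDiff ℝ (⊤ : ℕ∞) fun q : ℝ × ℝ => η q.1 q.2) (hηpos : ∀ a b, 0 < η a b)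
    (φ θ : ℝ → (Fin d → ℝ) → ℝ) (u : ℝ → (Fin d → ℝ) → Fin d → ℝ)
    (Q : ℝ → (Fin d → ℝ) → ℝ)
    (hφ : ContDiff ℝ (⊤ : ℕ∞) fun q : ℝ × (Fin d → ℝ) => φ q.1 q.2)
    (hθsm : ContDiff ℝ (⊤ : ℕ∞) fun q : ℝ × (Fin d → ℝ) => θ q.1 q.2)
    (husm : ContDiff ℝ (⊤ : ℕ∞) fun q : ℝ × (Fin d → ℝ) => u q.1 q.2)
    (hQsm : ContDiff ℝ (⊤ : ℕ∞) fun q : ℝ × (Fin d → ℝ) => Q q.1 q.2)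
    (hθpos : ∀ t x, 0 < θ t x)
    -- (AC): ∂ₜφ + u·∇φ = -Mμ/θ
    (hAC : ∀ t ∈ Set.Ioo (0 : ℝ) T, ∀ x,
      dt φ t x + dot (u t x) (grad (φ t) x)
        = -(M (φ t x) (θ t x)) * chemMu G f φ θ t x / θ t x)
    -- (IE): ∂ₜe + u·∇e = -div(K∇(1/θ)) + η|Du|² - σ̃:∇u + Q
    (hIE : ∀ t ∈ Set.Ioo (0 : ℝ) T, ∀ x,
      dt (intE f φ θ) t x + dot (u t x) (grad (intE f φ θ t) x)
        = -divg (fun y i => K (φ t y) (θ t y) * pd i (fun z => (θ t z)⁻¹) y) x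
          + η (φ t x) (θ t x) * (∑ i, ∑ j, (symGrad (u t) x i j) ^ 2)
          - (∑ i, ∑ j, korteweg G φ θ t x i j * pd i (fun y => u t y j) x)
          + Q t x) :
    ∀ t ∈ Set.Ioo (0 : ℝ) T, ∀ x,
      dt (entS G f φ θ) t x + dot (u t x) (grad (entS G f φ θ t) x)
        = M (φ t x) (θ t x) * (chemMu G f φ θ t x / θ t x) ^ 2
          + K (φ t x) (θ t x) * (∑ i, (pd i (fun z => (θ t z)⁻¹) x) ^ 2)
          + η (φ t x) (θ t x) / θ t x * (∑ i, ∑ j, (symGrad (u t) x i j) ^ 2)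
          + Q t x / θ t x
          - divg (fun y i =>
              K (φ t y) (θ t y) / θ t y * pd i (fun z => (θ t z)⁻¹) y
                + grad G (grad (φ t) y) i * dt φ t y
                + grad G (grad (φ t) y) i * dot (grad (φ t) y) (u t y)) x := by
  intro t ht x
  have hφd := hφ.differentiable (by simp)
  have hθd := hθsm.differentiable (by simp)
  have hθ0 : θ t x ≠ 0 := (hθpos t x).ne'
  have hE := hIE t ht x
  rw [material_intE hf hφd hθd hθpos] at hE
  rw [material_entS hG hf hφ hθd hθpos]
  set H := fderiv ℝ
    (fun q : ℝ × (Fin d → ℝ) => deriv (f (φ q.1 q.2)) (θ q.1 q.2)) (t, x) (1, u t x)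
  have hA := hAC t ht x
  -- spatial regularity of `φ`, `θ`, `1/θ`, `K∇(1/θ)` and `∇G(∇φ)` at the fixed time `t`
  have hφt : ContDiff ℝ (⊤ : ℕ∞) (φ t) := hφ.comp (contDiff_prodMk_right t)
  have hθt : ContDiff ℝ (⊤ : ℕ∞) (θ t) := hθsm.comp (contDiff_prodMk_right t)
  have hinv : ContDiff ℝ (⊤ : ℕ∞) (fun z => (θ t z)⁻¹) := hθt.inv fun z => (hθpos t z).ne'
  have hKt : ContDiff ℝ (⊤ : ℕ∞) (fun y => K (φ t y) (θ t y)) :=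
    hK.comp (hφt.prodMk hθt)
  have hflux : ∀ i, DifferentiableAt ℝ
      (fun y => K (φ t y) (θ t y) * pd i (fun z => (θ t z)⁻¹) y) x := fun i =>
    (hKt.mul (contDiff_pd_slice (m := (⊤ : ℕ∞)) hinv (by simp) i)).differentiable (by simp) x
  have hgr : ContDiff ℝ (⊤ : ℕ∞) (grad (φ t)) :=
    contDiff_pi.2 fun i => contDiff_pd_slice (m := (⊤ : ℕ∞)) hφt (by simp) i
  have hg : ∀ i, DifferentiableAt ℝ (fun y => grad G (grad (φ t) y) i) x := fun i =>
    ((contDiff_pd_slice (m := 1) hG (by norm_num) i).differentiable (by simp)).comp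
      (hgr.differentiable (by simp)) x
  have hdiv : divg (fun y i =>
              K (φ t y) (θ t y) / θ t y * pd i (fun z => (θ t z)⁻¹) y
                + grad G (grad (φ t) y) i * dt φ t y
                + grad G (grad (φ t) y) i * dot (grad (φ t) y) (u t y)) x
      = K (φ t x) (θ t x) * (∑ i, (pd i (fun z => (θ t z)⁻¹) x) ^ 2)
        + (θ t x)⁻¹ * divg (fun y i => K (φ t y) (θ t y) * pd i (fun z => (θ t z)⁻¹) y) x
        + divg (fun y => grad G (grad (φ t) y)) x * (dt φ t x + dot (u t x) (grad (φ t) x))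
        + ∑ i, grad G (grad (φ t) x) i
            * (fderiv ℝ (fun q : ℝ × (Fin d → ℝ) => pd i (φ q.1) q.2) (t, x) (1, u t x)
              + ∑ j, pd i (fun y => u t y j) x * pd j (φ t) x) := by
    simp only [divg]
    rw [Finset.mul_sum, Finset.mul_sum, Finset.sum_mul, ← Finset.sum_add_distrib,
      ← Finset.sum_add_distrib, ← Finset.sum_add_distrib]
    refine Finset.sum_congr rfl fun i _ => ?_
    obtain ⟨hmd, hm⟩ := pd_material hφ husm t x i
    have hsplit : (fun y => K (φ t y) (θ t y) / θ t y * pd i (fun z => (θ t z)⁻¹) y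
                + grad G (grad (φ t) y) i * dt φ t y
                + grad G (grad (φ t) y) i * dot (grad (φ t) y) (u t y))
        = fun y => (θ t y)⁻¹ * (K (φ t y) (θ t y) * pd i (fun z => (θ t z)⁻¹) y)
            + grad G (grad (φ t) y) i * (dt φ t y + dot (u t y) (grad (φ t) y)) := by
      funext y
      have : dot (grad (φ t) y) (u t y) = dot (u t y) (grad (φ t) y) :=
        Finset.sum_congr rfl fun j _ => mul_comm _ _
      rw [this]
      ring
    have hid := hinv.differentiable (by simp) x
    rw [hsplit, pd_add (hid.fun_mul (hflux i)) ((hg i).fun_mul hmd), pd_mul hid (hflux i),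
      pd_mul (hg i) hmd, hm]
    ring
  simp only [mul_add (grad G (grad (φ t) x) _), Finset.sum_add_distrib] at hdiv
  rw [hdiv]
  -- the Korteweg work is `θ` times the commutator term of `pd_material`
  have hkor : (∑ i, ∑ j, korteweg G φ θ t x i j * pd i (fun y => u t y j) x)
      = θ t x * ∑ i, grad G (grad (φ t) x) i
          * ∑ j, pd i (fun y => u t y j) x * pd j (φ t) x := by
    simp only [korteweg, Finset.mul_sum]
    refine Finset.sum_congr rfl fun i _ => Finset.sum_congr rfl fun j _ => ?_
    ring
  rw [hkor] at hE
  have hμ : chemMu G f φ θ t x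
      = -θ t x * divg (fun y => grad G (grad (φ t) y)) x
        + deriv (fun a => f a (θ t x)) (φ t x) := rfl
  have hone : (θ t x)⁻¹ * θ t x = 1 := inv_mul_cancel₀ hθ0
  generalize chemMu G f φ θ t x = μ at *
  generalize dt φ t x + dot (u t x) (grad (φ t) x) = D at *
  set S := ∑ i, grad G (grad (φ t) x) i * ∑ j, pd i (fun y => u t y j) x * pd j (φ t) x
  -- (IE) divided by `θ`, and (AC) multiplied by `-μ/θ`
  linear_combination (θ t x)⁻¹ * hE - (μ / θ t x) * hA + (D / θ t x) * hμ
    + (H - S - divg (fun y => grad G (grad (φ t) y)) x * D) * hone
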